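/- Let S ⊂ ℂ⁴ be the set of the 120 singular points of the affine threefold f_5 = 0, and let D_4 act on S by the coordinate permutations σ_1(a_1,a_2,a_3,a_4) = (a_2,a_1,a_3,a_4), σ_2(a_1,a_2,a_3,a_4) = (a_1,a_2,a_4,a_3), σ_3(a_1,a_2,a_3,a_4) = (a_3,a_4,a_1,a_2) (these preserve S). For signs ε_1, ε_3 ∈ {+1, −1}, let W(ε_1, ε_3) = { φ : S → ℂ : φ∘σ_1 = ε_1 φ, φ∘σ_2 = ε_1 φ, φ∘σ_3 = ε_3 φ }. Then dim W(+1,+1) = 27, dim W(−1,+1) = 13, dim W(+1,−1) = 17, and dim W(−1,−1) = 7 (so the isotypic component of the 2-dimensional irreducible representation of D_4 in ℂ^S has dimension 120 − 64 = 56, i.e. multiplicity 28). -/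

import Mathlib

/-!
A point of `ℂ⁴` is a node iff both halves are critical points of `P_5` with the same critical value
(`mem_S_iff`). In the elementary symmetric functions `s = x + y`, `p = x y` the critical equations
factor, and modulo swapping `x` and `y` there are exactly ten critical points, with `s` and `p` in
`ℤ[ω]` for `ω` the golden ratio (`crit_iff`). Four of them lie on the diagonal `x = y`
(`HasIdx.eq_iff`); the other six come from two critical points each. The critical values are
`6` (two diagonal classes), `-2` (two diagonal and four off-diagonal classes) and `-3` (two
off-diagonal classes), by `HasIdx.P5_eq`.

A function in `W(ε₁, ε₃)` is determined by its values at one representative node for each pair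
`(i, j)` of classes with the same critical value (`Wsp_apply`). If `ε₁ = -1` the value vanishes as
soon as `i` or `j` is diagonal; the condition for `σ₃` says that the values form a symmetric
(`ε₃ = 1`) or antisymmetric (`ε₃ = -1`) array in `(i, j)`. Every such array occurs, so evaluation at
the pairs with `i ≤ j`, respectively `i < j`, is an isomorphism (`evalAdm_injective`,
`evalAdm_surjective`). With class numbers `a = (2, 6, 2)`, and `b = (0, 4, 2)` off the diagonal, the
four dimensions are `∑ a(a+1)/2 = 27`, `∑ b(b+1)/2 = 13`, `∑ a(a-1)/2 = 17`, `∑ b(b-1)/2 = 7`.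
-/


open MvPolynomial

/-- The degree-5 generalized Chebyshev polynomial `P_5` evaluated at two elements
of a commutative ring. -/
def P5 {R : Type*} [CommRing R] (x1 x2 : R) : R :=
  x1 ^ 5 + x2 ^ 5 - 5 * x1 * x2 * (x1 ^ 2 + x2 ^ 2) + 5 * x1 * x2 * (x1 + x2)
    + 5 * (x1 ^ 2 + x2 ^ 2) - 5 * (x1 + x2)

/-- `f_5 = P_5(x_1,x_2) - P_5(x_4,x_5)` as a polynomial in four variables over `ℂ`. -/
noncomputable def f5 : MvPolynomial (Fin 4) ℂ :=
  P5 (X 0) (X 1) - P5 (X 2) (X 3)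

/-- The set of singular points of the affine threefold `f_5 = 0` in `ℂ⁴`. -/
def S : Set (Fin 4 → ℂ) :=
  {p | eval p f5 = 0 ∧ ∀ i : Fin 4, eval p (pderiv i f5) = 0}

/-- The subspace of functions `φ : S → ℂ` satisfying `φ ∘ σ = ε·φ`, where `σ` is the
action on points induced by the coordinate permutation `π`
(i.e. `(σ p) i = p (π i)`). -/
noncomputable def Wsub (π : Equiv.Perm (Fin 4)) (ε : ℂ) : Submodule ℂ (S → ℂ) where
  carrier := {φ | ∀ p q : S, (q : Fin 4 → ℂ) = (p : Fin 4 → ℂ) ∘ π → φ q = ε * φ p}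
  add_mem' := by
    intro a b ha hb p q h
    simp only [Pi.add_apply, ha p q h, hb p q h]
    ring
  zero_mem' := by
    intro p q h
    simp
  smul_mem' := by
    intro c a ha p q h
    simp only [Pi.smul_apply, smul_eq_mul, ha p q h]
    ring

/-- `W(ε₁, ε₃)`: the space of functions `φ : S → ℂ` with `φ∘σ₁ = ε₁ φ`,
`φ∘σ₂ = ε₁ φ`, `φ∘σ₃ = ε₃ φ`, where `σ₁(a₁,a₂,a₃,a₄) = (a₂,a₁,a₃,a₄)`,
`σ₂(a₁,a₂,a₃,a₄) = (a₁,a₂,a₄,a₃)` and `σ₃(a₁,a₂,a₃,a₄) = (a₃,a₄,a₁,a₂)`. -/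
noncomputable def Wsp (ε₁ ε₃ : ℂ) : Submodule ℂ (S → ℂ) :=
  Wsub (Equiv.swap 0 1) ε₁ ⊓ Wsub (Equiv.swap 2 3) ε₁ ⊓
    Wsub (Equiv.swap 0 2 * Equiv.swap 1 3) ε₃

/-! ### Critical points of `P_5` -/

/-- One fifth of the partial derivative of `P_5` in its first argument; by symmetry of `P_5`,
one fifth of the derivative in the second argument is `D5 y x`. -/
def D5 (x y : ℂ) : ℂ := x ^ 4 - 3 * x ^ 2 * y - y ^ 3 + 2 * x * y + y ^ 2 + 2 * x - 1

/-- A point of `ℂ⁴` is a node iff both of its halves are critical points of `P_5` and they have the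
same critical value. -/
lemma mem_S_iff (p : Fin 4 → ℂ) :
    p ∈ S ↔ P5 (p 0) (p 1) = P5 (p 2) (p 3) ∧ (D5 (p 0) (p 1) = 0 ∧ D5 (p 1) (p 0) = 0) ∧
      (D5 (p 2) (p 3) = 0 ∧ D5 (p 3) (p 2) = 0) := by
  have h5 : ∀ i : Fin 4, pderiv i (5 : MvPolynomial (Fin 4) ℂ) = 0 := fun i =>
    (pderiv i).map_natCast 5
  have e : eval p f5 = P5 (p 0) (p 1) - P5 (p 2) (p 3) := by simp [f5, P5]
  have d0 : eval p (pderiv 0 f5) = 5 * D5 (p 0) (p 1) := by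
    simp [f5, P5, D5, pderiv_X, Derivation.leibniz, Derivation.leibniz_pow, h5]
    ring
  have d1 : eval p (pderiv 1 f5) = 5 * D5 (p 1) (p 0) := by
    simp [f5, P5, D5, pderiv_X, Derivation.leibniz, Derivation.leibniz_pow, h5]
    ring
  have d2 : eval p (pderiv 2 f5) = -5 * D5 (p 2) (p 3) := by
    simp [f5, P5, D5, pderiv_X, Derivation.leibniz, Derivation.leibniz_pow, h5]
    ring
  have d3 : eval p (pderiv 3 f5) = -5 * D5 (p 3) (p 2) := by
    simp [f5, P5, D5, pderiv_X, Derivation.leibniz, Derivation.leibniz_pow, h5]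
    ring
  simp [S, Fin.forall_fin_succ, e]
  rw [d0, d1, d2, d3]
  simp [sub_eq_zero, and_assoc]

/-- The golden ratio as a complex number. -/
noncomputable def om : ℂ := (Real.goldenRatio : ℂ)

lemma om_sq : om ^ 2 = om + 1 := by
  have := Real.goldenRatio_sq
  unfold om
  exact_mod_cast this

/-- The element `a + b ω` of `ℤ[ω]`, where `ω` is the golden ratio. -/
noncomputable def zom (z : ℤ × ℤ) : ℂ := z.1 + z.2 * om

lemma zom_injective : Function.Injective zom := by
  rintro ⟨a, b⟩ ⟨c, d⟩ h
  have h' : (a : ℝ) + b * Real.goldenRatio = c + d * Real.goldenRatio := by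
    simp only [zom, om] at h
    exact_mod_cast h
  have hbd : b = d := by
    by_contra hne
    have hne' : (b - d : ℤ) ≠ 0 := sub_ne_zero.mpr hne
    refine (Real.goldenRatio_irrational.intCast_mul hne').ne_int (c - a) ?_
    push_cast
    linarith
  subst hbd
  have : (a : ℝ) = c := by linarith
  simpa using this

/-- The sums `x + y` of the critical points `(x, y)` of `P_5` up to swapping coordinates, in the
basis `1, ω`. Indices `0, …, 3` are the critical points on the diagonal. -/
def sumZ : Fin 10 → ℤ × ℤ :=
  ![(0, 2), (2, -2), (2, 2), (4, -2), (-2, 0), (-2, 0), (0, 1), (1, -1), (0, -1), (-1, 1)]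

/-- The products `x y` of the critical points `(x, y)` of `P_5` up to swapping coordinates, in the
basis `1, ω`, with the same indexing as `sumZ`. -/
def prodZ : Fin 10 → ℤ × ℤ :=
  ![(1, 1), (2, -1), (2, 3), (5, -3), (3, 1), (4, -1), (1, 0), (1, 0), (1, 1), (2, -1)]

/-- The critical values of `P_5`, with the same indexing as `sumZ`. -/
def lvl : Fin 10 → ℤ := ![6, 6, -2, -2, -2, -2, -2, -2, -3, -3]

/-- `(x, y)` is one of the at most two points `(x, y)`, `(y, x)` with index `i`. -/
def HasIdx (x y : ℂ) (i : Fin 10) : Prop := x + y = zom (sumZ i) ∧ x * y = zom (prodZ i)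

lemma HasIdx.symm {x y : ℂ} {i : Fin 10} (h : HasIdx x y i) : HasIdx y x i :=
  ⟨by rw [add_comm, h.1], by rw [mul_comm, h.2]⟩

lemma HasIdx.unique {x y : ℂ} {i j : Fin 10} (hi : HasIdx x y i) (hj : HasIdx x y j) : i = j := by
  have h1 := zom_injective (hi.1.symm.trans hj.1)
  have h2 := zom_injective (hi.2.symm.trans hj.2)
  revert i j
  have key : ∀ i j : Fin 10, sumZ i = sumZ j → prodZ i = prodZ j → i = j := by decide
  exact fun {i j} _ _ h1 h2 => key i j h1 h2

/-- Two points with the same index agree up to swapping coordinates. -/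
lemma HasIdx.eq_or {x y u v : ℂ} {i : Fin 10} (h : HasIdx x y i) (k : HasIdx u v i) :
    (x = u ∧ y = v) ∨ (x = v ∧ y = u) := by
  have h1 : x + y = u + v := h.1.trans k.1.symm
  have h2 : x * y = u * v := h.2.trans k.2.symm
  have h3 : (x - u) * (x - v) = 0 := by linear_combination x * h1 - h2
  rcases mul_eq_zero.mp h3 with h4 | h4
  · exact Or.inl ⟨by linear_combination h4, by linear_combination h1 - h4⟩
  · exact Or.inr ⟨by linear_combination h4, by linear_combination h1 - h4⟩

/-- The diagonal indices are exactly `0, …, 3`: the discriminant `(x + y)² - 4 x y` vanishes there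
and only there. -/
lemma HasIdx.eq_iff {x y : ℂ} {i : Fin 10} (h : HasIdx x y i) : x = y ↔ i < 4 := by
  have hd : (x - y) ^ 2 = zom (sumZ i) ^ 2 - 4 * zom (prodZ i) := by
    rw [← h.1, ← h.2]; ring
  -- the discriminant in the basis `1, ω`
  have hz : zom (sumZ i) ^ 2 - 4 * zom (prodZ i) =
      zom ((sumZ i).1 ^ 2 + (sumZ i).2 ^ 2 - 4 * (prodZ i).1,
        2 * (sumZ i).1 * (sumZ i).2 + (sumZ i).2 ^ 2 - 4 * (prodZ i).2) := by
    simp only [zom]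
    push_cast
    linear_combination ((sumZ i).2 : ℂ) ^ 2 * om_sq
  have h0 : zom (0, 0) = 0 := by simp [zom]
  rw [← sub_eq_zero, ← pow_eq_zero_iff two_ne_zero, hd, hz, ← h0, zom_injective.eq_iff]
  clear hd hz h
  revert i
  decide

/-- `P_5` written in the elementary symmetric functions, evaluated at each index. -/
lemma HasIdx.P5_eq {x y : ℂ} {i : Fin 10} (h : HasIdx x y i) : P5 x y = lvl i := by
  obtain ⟨h1, h2⟩ := h
  have key : P5 x y = (x + y) ^ 5 - 5 * (x + y) ^ 3 * (x * y) + 5 * (x + y) * (x * y) ^ 2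
      - 5 * (x * y) * ((x + y) ^ 2 - 2 * (x * y)) + 5 * (x * y) * (x + y)
      + 5 * ((x + y) ^ 2 - 2 * (x * y)) - 5 * (x + y) := by
    unfold P5; ring
  rw [key, h1, h2]
  have h3 : om ^ 3 = 2 * om + 1 := by linear_combination (om + 1) * om_sq
  have h4 : om ^ 4 = 3 * om + 2 := by linear_combination (om ^ 2 + om + 2) * om_sq
  have h5 : om ^ 5 = 5 * om + 3 := by linear_combination (om ^ 3 + om ^ 2 + 2 * om + 3) * om_sq
  clear key h1 h2
  fin_cases i <;> simp [zom, sumZ, prodZ, lvl] <;> ring_nf <;> simp only [om_sq, h3, h4, h5] <;>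
    ring

/-- The critical points of `P_5` are the points with an index. With `s = x + y` and `p = x y`, the
two critical equations `D5 x y = D5 y x = 0` are equivalent to
`(x - y) (s + 2) (s² - s + 1 - 2 p) = 0` together with
`s⁴ - 4 s² p + 2 p² - s³ + 2 p + s² + 2 s - 2 = 0`. -/
lemma crit_iff (x y : ℂ) : (D5 x y = 0 ∧ D5 y x = 0) ↔ ∃ i, HasIdx x y i := by
  have hdiff : D5 x y - D5 y x = (x - y) * ((x + y + 2) *
      ((x + y) ^ 2 - (x + y) + 1 - 2 * (x * y))) := by unfold D5; ring
  have hsum : D5 x y + D5 y x = (x + y) ^ 4 - 4 * (x + y) ^ 2 * (x * y) + 2 * (x * y) ^ 2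
      - (x + y) ^ 3 + 2 * (x * y) + (x + y) ^ 2 + 2 * (x + y) - 2 := by unfold D5; ring
  have h3 : om ^ 3 = 2 * om + 1 := by linear_combination (om + 1) * om_sq
  have h4 : om ^ 4 = 3 * om + 2 := by linear_combination (om ^ 2 + om + 2) * om_sq
  constructor
  · rintro ⟨h1, h2⟩
    rw [h1, h2, sub_zero, eq_comm, mul_eq_zero, mul_eq_zero] at hdiff
    rw [h1, h2, add_zero] at hsum
    rcases hdiff with h | h | h
    · -- on the diagonal, `D5 x x` splits over `ℤ[ω]`
      obtain rfl : x = y := sub_eq_zero.mp h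
      have hx : (x - om) * ((x - (1 - om)) * ((x - (1 + om)) * (x - (2 - om)))) = 0 := by
        rw [← h1]; unfold D5
        ring_nf; simp only [om_sq, h3, h4]; ring
      rcases mul_eq_zero.mp hx with hx | hx
      · refine ⟨0, ?_⟩
        rw [sub_eq_zero.mp hx]
        exact ⟨by simp [zom, sumZ]; ring, by simp [zom, prodZ]; linear_combination om_sq⟩
      rcases mul_eq_zero.mp hx with hx | hx
      · refine ⟨1, ?_⟩
        rw [sub_eq_zero.mp hx]
        exact ⟨by simp [zom, sumZ]; ring, by simp [zom, prodZ]; linear_combination om_sq⟩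
      rcases mul_eq_zero.mp hx with hx | hx
      · refine ⟨2, ?_⟩
        rw [sub_eq_zero.mp hx]
        exact ⟨by simp [zom, sumZ]; ring, by simp [zom, prodZ]; linear_combination om_sq⟩
      · refine ⟨3, ?_⟩
        rw [sub_eq_zero.mp hx]
        exact ⟨by simp [zom, sumZ]; ring, by simp [zom, prodZ]; linear_combination om_sq⟩
    · -- `s = -2` leaves `p² - 7 p + 11 = 0`
      have hs : x + y = -2 := by linear_combination h
      rw [hs] at hsum
      have hp : (x * y - (3 + om)) * (x * y - (4 - om)) = 0 := by
        linear_combination -hsum / 2 - om_sq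
      rcases mul_eq_zero.mp hp with hp | hp
      · exact ⟨4, by simp [zom, sumZ, hs], by simp [zom, prodZ]; linear_combination hp⟩
      · exact ⟨5, by simp [zom, sumZ, hs], by simp [zom, prodZ]; linear_combination hp⟩
    · -- `p = (s² - s + 1) / 2` leaves `s⁴ - 3 s² + 1 = 0`
      have hp : x * y = ((x + y) ^ 2 - (x + y) + 1) / 2 := by linear_combination -h / 2
      have hs : ((x + y) - om) * (((x + y) - (1 - om)) *
          (((x + y) + om) * ((x + y) - (om - 1)))) = 0 := by
        generalize x + y = s at *
        rw [hp] at hsum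
        have : s ^ 4 - 3 * s ^ 2 + 1 = 0 := by linear_combination 2 * hsum
        rw [← this]
        ring_nf; simp only [om_sq, h3, h4]; ring
      rcases mul_eq_zero.mp hs with hs | hs
      · have hs' : x + y = om := by linear_combination hs
        rw [hs'] at hp
        exact ⟨6, by simp [zom, sumZ, hs'],
          by rw [hp]; simp [zom, prodZ]; linear_combination om_sq / 2⟩
      rcases mul_eq_zero.mp hs with hs | hs
      · have hs' : x + y = 1 - om := by linear_combination hs
        rw [hs'] at hp
        exact ⟨7, by simp [zom, sumZ, hs']; ring,
          by rw [hp]; simp [zom, prodZ]; linear_combination om_sq / 2⟩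
      rcases mul_eq_zero.mp hs with hs | hs
      · have hs' : x + y = -om := by linear_combination hs
        rw [hs'] at hp
        exact ⟨8, by simp [zom, sumZ, hs'],
          by rw [hp]; simp [zom, prodZ]; linear_combination om_sq / 2⟩
      · have hs' : x + y = om - 1 := by linear_combination hs
        rw [hs'] at hp
        exact ⟨9, by simp [zom, sumZ, hs']; ring,
          by rw [hp]; simp [zom, prodZ]; linear_combination om_sq / 2⟩
  · rintro ⟨i, h⟩
    have hq : (x - y) * ((x + y + 2) * ((x + y) ^ 2 - (x + y) + 1 - 2 * (x * y))) = 0 := by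
      by_cases hi : i < 4
      · rw [sub_eq_zero.mpr (h.eq_iff.mpr hi), zero_mul]
      · rw [h.1, h.2]
        refine mul_eq_zero_of_right _ ?_
        clear hdiff hsum h
        fin_cases i <;> simp at hi <;> simp [zom, sumZ, prodZ, -mul_eq_zero] <;>
          refine mul_eq_zero_of_right _ ?_ <;> linear_combination om_sq
    have hr : D5 x y + D5 y x = 0 := by
      rw [hsum, h.1, h.2]
      clear hdiff hsum h hq
      fin_cases i <;> simp [zom, sumZ, prodZ] <;> ring_nf <;>
        simp only [om_sq, h3, h4] <;> ring
    rw [hq] at hdiff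
    exact ⟨by linear_combination (hr + hdiff) / 2, by linear_combination (hr - hdiff) / 2⟩

lemma mem_S_iff_idx (p : Fin 4 → ℂ) :
    p ∈ S ↔ ∃ i j, lvl i = lvl j ∧ HasIdx (p 0) (p 1) i ∧ HasIdx (p 2) (p 3) j := by
  rw [mem_S_iff, crit_iff, crit_iff]
  constructor
  · rintro ⟨h, ⟨i, hi⟩, j, hj⟩
    rw [hi.P5_eq, hj.P5_eq] at h
    exact ⟨i, j, by exact_mod_cast h, hi, hj⟩
  · rintro ⟨i, j, h, hi, hj⟩
    exact ⟨by rw [hi.P5_eq, hj.P5_eq, h], ⟨i, hi⟩, j, hj⟩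

lemma exists_hasIdx (i : Fin 10) : ∃ x y, HasIdx x y i := by
  obtain ⟨d, hd⟩ := IsAlgClosed.exists_pow_nat_eq (zom (sumZ i) ^ 2 - 4 * zom (prodZ i)) two_pos
  refine ⟨(zom (sumZ i) + d) / 2, (zom (sumZ i) - d) / 2, by ring, ?_⟩
  linear_combination -hd / 4

/-! ### Nodes and their indices -/

/-- First coordinate of a chosen critical point with index `i`. -/
noncomputable def x0 (i : Fin 10) : ℂ := (exists_hasIdx i).choose

/-- Second coordinate of the chosen critical point with index `i`. -/
noncomputable def y0 (i : Fin 10) : ℂ := (exists_hasIdx i).choose_spec.choose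

lemma hasIdx0 (i : Fin 10) : HasIdx (x0 i) (y0 i) i := (exists_hasIdx i).choose_spec.choose_spec

/-- The node with the given coordinates, whose halves have indices `i` and `j`. -/
def mkNode {x y z w : ℂ} {i j : Fin 10} (h : lvl i = lvl j) (h1 : HasIdx x y i)
    (h2 : HasIdx z w j) : S :=
  ⟨![x, y, z, w], (mem_S_iff_idx _).mpr ⟨i, j, h, by simpa using h1, by simpa using h2⟩⟩

/-- The representative node with indices `i` and `j`. -/
noncomputable def node (i j : Fin 10) (h : lvl i = lvl j) : S := mkNode h (hasIdx0 i) (hasIdx0 j)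

lemma exists_idx (p : S) : ∃ k : Fin 10 × Fin 10, lvl k.1 = lvl k.2 ∧
    HasIdx (p.1 0) (p.1 1) k.1 ∧ HasIdx (p.1 2) (p.1 3) k.2 := by
  obtain ⟨i, j, h⟩ := (mem_S_iff_idx _).mp p.2
  exact ⟨(i, j), h⟩

/-- The pair of indices of the two halves of a node. -/
noncomputable def idx (p : S) : Fin 10 × Fin 10 := (exists_idx p).choose

lemma idx_lvl (p : S) : lvl (idx p).1 = lvl (idx p).2 := (exists_idx p).choose_spec.1

lemma idx_fst (p : S) : HasIdx (p.1 0) (p.1 1) (idx p).1 := (exists_idx p).choose_spec.2.1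

lemma idx_snd (p : S) : HasIdx (p.1 2) (p.1 3) (idx p).2 := (exists_idx p).choose_spec.2.2

lemma idx_eq {p : S} {i j : Fin 10} (h1 : HasIdx (p.1 0) (p.1 1) i)
    (h2 : HasIdx (p.1 2) (p.1 3) j) : idx p = (i, j) :=
  Prod.ext ((idx_fst p).unique h1) ((idx_snd p).unique h2)

/-! ### Coordinate form of the conditions defining `Wsp` -/

lemma comp_swap01 (p : Fin 4 → ℂ) : p ∘ (Equiv.swap (0 : Fin 4) 1) = ![p 1, p 0, p 2, p 3] := by
  ext i; fin_cases i <;> rfl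

lemma comp_swap23 (p : Fin 4 → ℂ) : p ∘ (Equiv.swap (2 : Fin 4) 3) = ![p 0, p 1, p 3, p 2] := by
  ext i; fin_cases i <;> rfl

lemma comp_swap_swap (p : Fin 4 → ℂ) :
    p ∘ ⇑(Equiv.swap (0 : Fin 4) 2 * Equiv.swap (1 : Fin 4) 3) = ![p 2, p 3, p 0, p 1] := by
  ext i; fin_cases i <;> rfl

lemma mem_Wsp {ε₁ ε₃ : ℂ} {φ : S → ℂ} : φ ∈ Wsp ε₁ ε₃ ↔
    (∀ p q : S, q.1 = ![p.1 1, p.1 0, p.1 2, p.1 3] → φ q = ε₁ * φ p) ∧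
    (∀ p q : S, q.1 = ![p.1 0, p.1 1, p.1 3, p.1 2] → φ q = ε₁ * φ p) ∧
    (∀ p q : S, q.1 = ![p.1 2, p.1 3, p.1 0, p.1 1] → φ q = ε₃ * φ p) := by
  simp only [Wsp, Submodule.mem_inf, and_assoc]
  simp only [← comp_swap01, ← comp_swap23, ← comp_swap_swap]
  rfl

/-- The sign encoded by a Boolean: `true` stands for `-1`. -/
def sg (a : Bool) : ℂ := if a then -1 else 1

lemma sg_mul_self (a : Bool) : sg a * sg a = 1 := by cases a <;> simp [sg]

open Classical in
/-- The sign relating a critical point with index `i` and first coordinate `x` to the chosen one. -/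
noncomputable def gs (a : Bool) (x : ℂ) (i : Fin 10) : ℂ := if x = x0 i then 1 else sg a

lemma gs_x0 (a : Bool) (i : Fin 10) : gs a (x0 i) i = 1 := if_pos rfl

/-- Swapping the coordinates of an off-diagonal critical point changes `gs` by the sign `sg a`; on
the diagonal this still holds if that sign is `1`. -/
lemma gs_swap {a : Bool} {x y : ℂ} {i : Fin 10} (h : HasIdx x y i) (ha : a = true → 4 ≤ i) :
    gs a y i = sg a * gs a x i := by
  cases a with
  | false => simp [gs, sg]
  | true =>
    have hne : x0 i ≠ y0 i := fun e => absurd ((hasIdx0 i).eq_iff.mp e) (not_lt.mpr (ha rfl))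
    rcases h.eq_or (hasIdx0 i) with ⟨rfl, rfl⟩ | ⟨rfl, rfl⟩ <;> simp [gs, sg, hne.symm]

/-- An element of `Wsp` is determined by its values at the representative nodes. -/
lemma Wsp_apply {a : Bool} {ε₃ : ℂ} {φ : S → ℂ} (hφ : φ ∈ Wsp (sg a) ε₃) (p : S) :
    φ p = gs a (p.1 0) (idx p).1 * gs a (p.1 2) (idx p).2 *
      φ (node (idx p).1 (idx p).2 (idx_lvl p)) := by
  obtain ⟨h1, h2, -⟩ := mem_Wsp.mp hφ
  suffices H : ∀ i j (hl : lvl i = lvl j), HasIdx (p.1 0) (p.1 1) i → HasIdx (p.1 2) (p.1 3) j →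
      φ p = gs a (p.1 0) i * gs a (p.1 2) j * φ (node i j hl) from
    H _ _ (idx_lvl p) (idx_fst p) (idx_snd p)
  intro i j hl hi hj
  have e1 : φ p = gs a (p.1 0) i * φ (mkNode hl (hasIdx0 i) hj) := by
    by_cases hx : p.1 0 = x0 i
    · have hy : p.1 1 = y0 i := by linear_combination hi.1 - (hasIdx0 i).1 - hx
      have : p = mkNode hl (hasIdx0 i) hj := by
        ext k; fin_cases k <;> simp [mkNode, hx, hy]
      rw [hx, gs_x0, one_mul]
      exact congrArg φ this
    · rcases hi.eq_or (hasIdx0 i) with h | h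
      · exact absurd h.1 hx
      · rw [gs, if_neg hx]
        apply h1
        ext k; fin_cases k <;> simp [mkNode, h.1, h.2]
  have e2 : φ (mkNode hl (hasIdx0 i) hj) = gs a (p.1 2) j * φ (node i j hl) := by
    by_cases hx : p.1 2 = x0 j
    · have hy : p.1 3 = y0 j := by linear_combination hj.1 - (hasIdx0 j).1 - hx
      have : mkNode hl (hasIdx0 i) hj = node i j hl := by
        ext k; fin_cases k <;> simp [mkNode, node, hx, hy]
      rw [this, hx, gs_x0, one_mul]
    · rcases hj.eq_or (hasIdx0 j) with h | h
      · exact absurd h.1 hx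
      · rw [gs, if_neg hx]
        apply h2
        ext k; fin_cases k <;> simp [mkNode, node, h.1, h.2]
  rw [e1, e2, mul_assoc]

/-! ### Dimension count -/

/-- The pairs of indices `(i, j)` at which the values of an element of `Wsp (sg a) (sg b)` may be
prescribed freely: the critical values agree, both indices are off-diagonal if `sg a = -1`, and
`i ≤ j`, strictly if `sg b = -1`. -/
def Adm (a b : Bool) (k : Fin 10 × Fin 10) : Prop :=
  lvl k.1 = lvl k.2 ∧ (a = true → 4 ≤ k.1 ∧ 4 ≤ k.2) ∧ k.1 ≤ k.2 ∧ (b = true → k.1 ≠ k.2)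

instance (a b : Bool) : DecidablePred (Adm a b) := fun k => by unfold Adm; infer_instance

lemma eq_zero_of_eq_neg_one_mul {z : ℂ} (h : z = -1 * z) : z = 0 := by
  linear_combination h / 2

/-- Evaluation at the representative nodes with admissible indices. -/
noncomputable def evalAdm (a b : Bool) : Wsp (sg a) (sg b) →ₗ[ℂ] ({k // Adm a b k} → ℂ) where
  toFun φ k := φ.1 (node k.1.1 k.1.2 k.2.1)
  map_add' _ _ := rfl
  map_smul' _ _ := rfl

lemma evalAdm_injective (a b : Bool) : Function.Injective (evalAdm a b) := by
  rw [injective_iff_map_eq_zero]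
  rintro ⟨φ, hφ⟩ h0
  have hz : ∀ k : {k // Adm a b k}, φ (node k.1.1 k.1.2 k.2.1) = 0 := fun k => congrFun h0 k
  obtain ⟨h1, h2, h3⟩ := mem_Wsp.mp hφ
  suffices H : ∀ i j (h : lvl i = lvl j), φ (node i j h) = 0 by
    ext p
    simp only [Wsp_apply hφ p, H, mul_zero]
    rfl
  intro i j h
  by_cases hA : a = true → 4 ≤ i ∧ 4 ≤ j
  · rcases lt_trichotomy i j with hij | rfl | hij
    · exact hz ⟨(i, j), h, hA, hij.le, fun _ => hij.ne⟩
    · cases b with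
      | false => exact hz ⟨(i, i), h, hA, le_rfl, by simp⟩
      | true =>
        -- `node i i` is fixed by `σ₃`, which acts by `-1`
        exact eq_zero_of_eq_neg_one_mul (h3 (node i i h) (node i i h)
          (by ext k; fin_cases k <;> simp [node, mkNode]))
    · rw [h3 (node j i h.symm) (node i j h) (by ext k; fin_cases k <;> simp [node, mkNode]),
        hz ⟨(j, i), h.symm, fun ha => (hA ha).symm, hij.le, fun _ => hij.ne⟩, mul_zero]
  · -- a diagonal half makes the node fixed by `σ₁` or `σ₂`, which act by `-1`
    rw [Classical.not_imp] at hA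
    obtain ⟨rfl, hA⟩ := hA
    by_cases hi : i < 4
    · have e := (hasIdx0 i).eq_iff.mpr hi
      exact eq_zero_of_eq_neg_one_mul (h1 (node i j h) (node i j h)
        (by ext k; fin_cases k <;> simp [node, mkNode, e]))
    · have hj : j < 4 := by
        by_contra hj
        exact hA ⟨not_lt.mp hi, not_lt.mp hj⟩
      have e := (hasIdx0 j).eq_iff.mpr hj
      exact eq_zero_of_eq_neg_one_mul (h2 (node i j h) (node i j h)
        (by ext k; fin_cases k <;> simp [node, mkNode, e]))

/-- The extension of values at admissible pairs of indices to all pairs of indices that is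
symmetric or antisymmetric according to `sg b`. -/
noncomputable def extend (a b : Bool) (M : {k // Adm a b k} → ℂ) (i j : Fin 10) : ℂ :=
  if h : Adm a b (i, j) then M ⟨(i, j), h⟩
  else if h : Adm a b (j, i) then sg b * M ⟨(j, i), h⟩ else 0

lemma extend_swap (a b : Bool) (M : {k // Adm a b k} → ℂ) (i j : Fin 10) :
    extend a b M j i = sg b * extend a b M i j := by
  by_cases h : Adm a b (i, j) <;> by_cases h' : Adm a b (j, i)
  · obtain rfl : i = j := le_antisymm h.2.2.1 h'.2.2.1
    have hb : b = false := by
      by_contra hb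
      exact h.2.2.2 (by simpa using hb) rfl
    simp [hb, sg]
  · simp [extend, h, h']
  · simp [extend, h, h', ← mul_assoc, sg_mul_self]
  · simp [extend, h, h']

lemma extend_eq_zero {a b : Bool} (M : {k // Adm a b k} → ℂ) {i j : Fin 10}
    (h : ¬(a = true → 4 ≤ i ∧ 4 ≤ j)) : extend a b M i j = 0 := by
  rw [extend, dif_neg fun hk => h hk.2.1, dif_neg fun hk => h fun ha => (hk.2.1 ha).symm]

lemma evalAdm_surjective (a b : Bool) : Function.Surjective (evalAdm a b) := by
  intro M
  let φ : S → ℂ := fun p => gs a (p.1 0) (idx p).1 * gs a (p.1 2) (idx p).2 *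
    extend a b M (idx p).1 (idx p).2
  have hφ : φ ∈ Wsp (sg a) (sg b) := by
    rw [mem_Wsp]
    refine ⟨fun p q hq => ?_, fun p q hq => ?_, fun p q hq => ?_⟩
    · have hidx : idx q = ((idx p).1, (idx p).2) :=
        idx_eq (by simpa [hq] using (idx_fst p).symm) (by simpa [hq] using idx_snd p)
      by_cases hA : a = true → 4 ≤ (idx p).1 ∧ 4 ≤ (idx p).2
      · have := gs_swap (idx_fst p) fun ha => (hA ha).1
        simp [φ, hidx, hq, this, mul_assoc]
      · simp [φ, hidx, extend_eq_zero M hA]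
    · have hidx : idx q = ((idx p).1, (idx p).2) :=
        idx_eq (by simpa [hq] using idx_fst p) (by simpa [hq] using (idx_snd p).symm)
      by_cases hA : a = true → 4 ≤ (idx p).1 ∧ 4 ≤ (idx p).2
      · have := gs_swap (idx_snd p) fun ha => (hA ha).2
        simp only [φ, hidx, hq, this, Matrix.cons_val]
        ring
      · simp [φ, hidx, extend_eq_zero M hA]
    · have hidx : idx q = ((idx p).2, (idx p).1) :=
        idx_eq (by simpa [hq] using idx_snd p) (by simpa [hq] using idx_fst p)
      simp only [φ, hidx, hq, Matrix.cons_val, Matrix.cons_val_zero]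
      rw [extend_swap]
      ring
  refine ⟨⟨φ, hφ⟩, ?_⟩
  ext ⟨⟨i, j⟩, hk⟩
  have hidx : idx (node i j hk.1) = (i, j) :=
    idx_eq (by simpa [node, mkNode] using hasIdx0 i) (by simpa [node, mkNode] using hasIdx0 j)
  have hv : φ (node i j hk.1) = M ⟨(i, j), hk⟩ := by
    simp only [φ, hidx]
    simp [node, mkNode, gs_x0, extend, hk]
  exact hv

lemma finrank_Wsp (a b : Bool) :
    Module.finrank ℂ (Wsp (sg a) (sg b)) = Fintype.card {k // Adm a b k} := by
  rw [(LinearEquiv.ofBijective (evalAdm a b)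
    ⟨evalAdm_injective a b, evalAdm_surjective a b⟩).finrank_eq, Module.finrank_fintype_fun_eq_card]

/-- The coordinate permutations `σ₁, σ₂, σ₃` preserve the set `S` of the 120 nodes,
and the sign-isotypic components of the `D₄`-module `ℂ^S` have dimensions
27, 13, 17 and 7. -/
theorem dims_isotypic_functions_on_nodes :
    (∀ p ∈ S, (p ∘ (Equiv.swap (0 : Fin 4) 1)) ∈ S) ∧
    (∀ p ∈ S, (p ∘ (Equiv.swap (2 : Fin 4) 3)) ∈ S) ∧
    (∀ p ∈ S, (p ∘ ⇑(Equiv.swap (0 : Fin 4) 2 * Equiv.swap (1 : Fin 4) 3)) ∈ S) ∧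
    Module.finrank ℂ (Wsp 1 1) = 27 ∧
    Module.finrank ℂ (Wsp (-1) 1) = 13 ∧
    Module.finrank ℂ (Wsp 1 (-1)) = 17 ∧
    Module.finrank ℂ (Wsp (-1) (-1)) = 7 := by
  have hp : sg false = 1 := rfl
  have hm : sg true = -1 := rfl
  refine ⟨fun p hp => ?_, fun p hp => ?_, fun p hp => ?_, ?_, ?_, ?_, ?_⟩
  · rw [comp_swap01]
    exact (mkNode (idx_lvl ⟨p, hp⟩) (idx_fst ⟨p, hp⟩).symm (idx_snd ⟨p, hp⟩)).2
  · rw [comp_swap23]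
    exact (mkNode (idx_lvl ⟨p, hp⟩) (idx_fst ⟨p, hp⟩) (idx_snd ⟨p, hp⟩).symm).2
  · rw [comp_swap_swap]
    exact (mkNode (idx_lvl ⟨p, hp⟩).symm (idx_snd ⟨p, hp⟩) (idx_fst ⟨p, hp⟩)).2
  · rw [← hp, finrank_Wsp]
    decide
  · rw [← hm, ← hp, finrank_Wsp]
    decide
  · rw [← hm, ← hp, finrank_Wsp]
    decide
  · rw [← hm, finrank_Wsp]
    decide
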